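/- (Berndt–Chan √3 ratio.) One has ₂F₁(1/3, 2/3; 1; (3√3/4)·(√3 − 1)) = √3 · ₂F₁(1/3, 2/3; 1; (3√3 − 5)/4). (Both arguments lie in (0,1), so both hypergeometric series converge absolutely.) -/

import Mathlib

open Real

/-- Gauss hypergeometric function ₂F₁ defined via its power series
    (the tsum; converges absolutely for |z| < 1). -/
noncomputable def hyp2F1 (a b c z : ℝ) : ℝ :=
  ∑' n : ℕ, ((ascPochhammer ℝ n).eval a * (ascPochhammer ℝ n).eval b /
      (ascPochhammer ℝ n).eval c) * z ^ n / (Nat.factorial n)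

namespace BC

noncomputable def S (c : ℕ → ℝ) (z : ℝ) : ℝ := ∑' n : ℕ, c n * z ^ n

def D (c : ℕ → ℝ) (n : ℕ) : ℝ := ((n : ℝ) + 1) * c (n + 1)

def T (c : ℕ → ℝ) (n : ℕ) : ℝ := (n : ℝ) * c n

def PB (c : ℕ → ℝ) : Prop := ∃ k : ℕ, ∀ n, |c n| ≤ ((n : ℝ) + 1) ^ k

lemma PB.T {c : ℕ → ℝ} (h : PB c) : PB (T c) := by
  obtain ⟨k, h⟩ := h
  refine ⟨k + 1, fun n => ?_⟩
  have h0 : (0 : ℝ) ≤ n := Nat.cast_nonneg n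
  rw [BC.T, abs_mul, abs_of_nonneg h0, pow_succ, mul_comm]
  exact mul_le_mul (h n) (by linarith) h0 (by positivity)

lemma summ_poly (k : ℕ) {r : ℝ} (h0 : 0 ≤ r) (h1 : r < 1) :
    Summable (fun n : ℕ => ((n : ℝ) + 1) ^ k * r ^ n) := by
  rcases h0.eq_or_lt with rfl | hpos
  · apply summable_of_ne_finset_zero (s := {0})
    intro n hn
    have : n ≠ 0 := by simpa using hn
    simp [this]
  have h := summable_pow_mul_geometric_of_norm_lt_one (R := ℝ) k (r := r)
    (by rwa [Real.norm_eq_abs, abs_of_nonneg h0])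
  have h2 := ((summable_nat_add_iff 1).2 h).mul_left r⁻¹
  refine h2.congr fun n => ?_
  push_cast
  rw [pow_succ]
  field_simp

lemma PB.summable {c : ℕ → ℝ} (h : PB c) {z : ℝ} (hz : |z| < 1) :
    Summable (fun n => c n * z ^ n) := by
  obtain ⟨k, h⟩ := h
  refine Summable.of_norm_bounded (summ_poly k (abs_nonneg z) hz) fun n => ?_
  rw [Real.norm_eq_abs, abs_mul, abs_pow]
  exact mul_le_mul_of_nonneg_right (h n) (by positivity)

lemma PB.hasDerivAt {c : ℕ → ℝ} (h : PB c) {z : ℝ} (hz : |z| < 1) :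
    HasDerivAt (S c) (S (D c) z) z := by
  obtain ⟨r, hr1, hr2⟩ := exists_between hz
  have hr0 : 0 < r := (abs_nonneg z).trans_lt hr1
  have hd := h.T
  obtain ⟨k, hk⟩ := hd
  have hu : Summable (fun n : ℕ => r⁻¹ * (((n : ℝ) + 1) ^ k * r ^ n)) :=
    (summ_poly k hr0.le hr2).mul_left _
  have key := hasDerivAt_tsum_of_isPreconnected (t := Metric.ball (0 : ℝ) r)
    (g := fun n y => c n * y ^ n) (g' := fun n y => c n * (n * y ^ (n - 1)))
    (y₀ := 0) (y := z) hu Metric.isOpen_ball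
    (convex_ball (0 : ℝ) r).isPreconnected
    (fun n y _ => (hasDerivAt_pow n y).const_mul (c n)) ?_ (by simpa using hr0)
    (h.summable (by simp)) (by simpa using hr1)
  · have e : (∑' n : ℕ, c n * (n * z ^ (n - 1))) = S (D c) z := by
      have hs : Summable (fun n : ℕ => c n * (n * z ^ (n - 1))) := by
        refine Summable.of_norm_bounded hu fun n => ?_
        rcases n with _ | n
        · simp; positivity
        · have := hk (n + 1)
          rw [BC.T, abs_mul] at this
          have h3 : |z| ^ n ≤ r ^ n := pow_le_pow_left₀ (abs_nonneg z) hr1.le n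
          rw [Real.norm_eq_abs, abs_mul, abs_mul, abs_pow]
          simp only [Nat.add_sub_cancel]
          calc _ = |((n + 1 : ℕ) : ℝ)| * |c (n + 1)| * |z| ^ n := by ring
            _ ≤ (((n + 1 : ℕ) : ℝ) + 1) ^ k * r ^ n := by
              apply mul_le_mul this h3 (by positivity) (by positivity)
            _ = _ := by rw [pow_succ]; field_simp
      rw [hs.tsum_eq_zero_add]
      simp only [S, D]
      simp
      congr 1
      ext n
      ring
    rw [← e]
    exact key
  · intro n y hy
    have hy' : |y| ≤ r := by
      have : |y| < r := by simpa using hy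
      exact this.le
    rcases n with _ | n
    · simp; positivity
    · have := hk (n + 1)
      rw [BC.T, abs_mul] at this
      have h3 : |y| ^ n ≤ r ^ n := pow_le_pow_left₀ (abs_nonneg y) hy' n
      rw [Real.norm_eq_abs, abs_mul, abs_mul, abs_pow]
      simp only [Nat.add_sub_cancel]
      calc _ = |((n + 1 : ℕ) : ℝ)| * |c (n + 1)| * |y| ^ n := by ring
        _ ≤ (((n + 1 : ℕ) : ℝ) + 1) ^ k * r ^ n := by
          apply mul_le_mul this h3 (by positivity) (by positivity)
        _ = _ := by rw [pow_succ]; field_simp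

lemma PB.theta {c : ℕ → ℝ} (h : PB c) {z : ℝ} (hz : |z| < 1) :
    S (BC.T c) z = z * S (D c) z := by
  rw [S, (h.T.summable hz).tsum_eq_zero_add, S, ← tsum_mul_left]
  simp only [BC.T, D]
  simp
  congr 1
  ext n
  ring

noncomputable def a (n : ℕ) : ℝ :=
  ((ascPochhammer ℝ n).eval (1/3) * (ascPochhammer ℝ n).eval (2/3) /
      (ascPochhammer ℝ n).eval 1) / (Nat.factorial n)

lemma a_zero : a 0 = 1 := by simp [a]

lemma a_succ (n : ℕ) : ((n : ℝ) + 1) ^ 2 * a (n + 1) = ((n : ℝ) ^ 2 + n + 2 / 9) * a n := by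
  have h : (ascPochhammer ℝ n).eval 1 ≠ 0 := (ascPochhammer_pos n 1 one_pos).ne'
  have h2 : (Nat.factorial n : ℝ) ≠ 0 := by positivity
  have h3 : (n : ℝ) + 1 ≠ 0 := by positivity
  have h4 : 1 + (n : ℝ) ≠ 0 := by positivity
  simp only [a, ascPochhammer_succ_eval, Nat.factorial_succ]
  push_cast
  field_simp
  ring

lemma a_nonneg (n : ℕ) : 0 ≤ a n := by
  have h := ascPochhammer_pos n (1 : ℝ) one_pos
  have h1 := ascPochhammer_pos n (1/3 : ℝ) (by norm_num)
  have h2 := ascPochhammer_pos n (2/3 : ℝ) (by norm_num)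
  unfold a
  positivity

lemma a_le (n : ℕ) : a n ≤ 1 := by
  induction n with
  | zero => rw [a_zero]
  | succ n ih =>
    have h := a_succ n
    have h0 : (0 : ℝ) ≤ n := Nat.cast_nonneg n
    have h1 := a_nonneg n
    by_contra! hc
    nlinarith [mul_le_mul_of_nonneg_left ih (by positivity : 0 ≤ (n : ℝ) ^ 2 + n + 2 / 9),
      mul_lt_mul_of_pos_left hc (by positivity : 0 < ((n : ℝ) + 1) ^ 2)]

lemma PBa : PB a := ⟨0, fun n => by rw [abs_of_nonneg (a_nonneg n)]; simpa using a_le n⟩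

lemma hyp_eq (z : ℝ) : hyp2F1 (1/3) (2/3) 1 z = S a z := by
  unfold hyp2F1 S a
  congr 1
  ext n
  ring

noncomputable def K (z : ℝ) : ℝ := (1 - z) * S (T a) z

lemma hF {z : ℝ} (hz : |z| < 1) : HasDerivAt (S a) (S (D a) z) z := PBa.hasDerivAt hz

lemma K_eq {z : ℝ} (hz : |z| < 1) : K z = z * (1 - z) * S (D a) z := by
  rw [K, PBa.theta hz]; ring

lemma hK {z : ℝ} (hz : |z| < 1) : HasDerivAt K (2 / 9 * S a z) z := by
  have h1 := PBa.T.hasDerivAt hz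
  have h2 := ((hasDerivAt_id z).const_sub 1).mul h1
  refine h2.congr_deriv ?_
  have e : S (D (T a)) z = S (T (T a)) z + S (T a) z + 2 / 9 * S a z := by
    have s1 := PBa.T.T.summable hz
    have s2 := PBa.T.summable hz
    have s3 := PBa.summable hz
    simp only [S]
    rw [← tsum_mul_left, ← s1.tsum_add s2, ← (s1.add s2).tsum_add (s3.mul_left _)]
    congr 1
    ext n
    have := a_succ n
    simp only [D, T]
    push_cast
    linear_combination z ^ n * this
  have e2 := PBa.T.theta hz
  simp only [id]
  linear_combination e + e2

lemma S_zero (c : ℕ → ℝ) : S c 0 = c 0 := by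
  rw [S, tsum_eq_single 0]
  · simp
  · intro n hn; simp [hn]

lemma F_pos {z : ℝ} (h0 : 0 ≤ z) (h1 : z < 1) : 0 < S a z := by
  have hs := PBa.summable (z := z) (by rwa [abs_of_nonneg h0])
  have := hs.le_tsum 0 (fun n _ => mul_nonneg (a_nonneg n) (pow_nonneg h0 n))
  rw [a_zero] at this
  simp only [S]
  simp at this
  linarith

noncomputable def al (x : ℝ) : ℝ := 1 - ((1 - x) / (1 + 2 * x)) ^ 3

lemma al_mem {x : ℝ} (h0 : 0 ≤ x) (h1 : x < 1) : 0 ≤ al x ∧ al x < 1 := by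
  have hp : 0 < 1 + 2 * x := by linarith
  have hq : 0 < (1 - x) / (1 + 2 * x) := div_pos (by linarith) hp
  have hr : (1 - x) / (1 + 2 * x) ≤ 1 := by rw [div_le_one hp]; linarith
  unfold al
  exact ⟨by linarith [pow_le_one₀ (n := 3) hq.le hr], by linarith [pow_pos hq 3]⟩

lemma al_deriv {x : ℝ} (h0 : 0 ≤ x) :
    HasDerivAt al (9 * (1 - x) ^ 2 / (1 + 2 * x) ^ 4) x := by
  have hp : 1 + 2 * x ≠ 0 := by positivity
  have h1 : HasDerivAt (fun x : ℝ => 1 - x) (-1) x := by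
    simpa using (hasDerivAt_id x).const_sub 1
  have h2 : HasDerivAt (fun x : ℝ => 1 + 2 * x) 2 x := by
    simpa using ((hasDerivAt_id x).const_mul 2).const_add 1
  refine (((h1.div h2 hp).pow 3).const_sub 1).congr_deriv ?_
  simp
  field_simp
  ring

/-- f, g and the weighted Wronskian -/
noncomputable def f (x : ℝ) : ℝ := S a (al x)
noncomputable def g (x : ℝ) : ℝ := (1 + 2 * x) * S a (x ^ 3)
noncomputable def R (x : ℝ) : ℝ :=
  (2 * (x * (1 - x ^ 3)) * S a (x ^ 3) + 3 * (1 + 2 * x) * K (x ^ 3)) / (1 + 2 * x) ^ 2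
noncomputable def V (x : ℝ) : ℝ := f x * R x - g x * K (al x)

lemma cube_mem {x : ℝ} (h0 : 0 ≤ x) (h1 : x < 1) : |x ^ 3| < 1 := by
  rw [abs_of_nonneg (by positivity)]
  exact pow_lt_one₀ h0 h1 (by norm_num)

lemma abs_al {x : ℝ} (h0 : 0 ≤ x) (h1 : x < 1) : |al x| < 1 := by
  rw [abs_of_nonneg (al_mem h0 h1).1]
  exact (al_mem h0 h1).2

lemma f_deriv {x : ℝ} (h0 : 0 ≤ x) (h1 : x < 1) :
    HasDerivAt f (S (D a) (al x) * (9 * (1 - x) ^ 2 / (1 + 2 * x) ^ 4)) x :=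
  (hF (abs_al h0 h1)).comp x (al_deriv h0)

lemma lin_deriv (x : ℝ) : HasDerivAt (fun x : ℝ => 1 + 2 * x) 2 x := by
  simpa using ((hasDerivAt_id x).const_mul 2).const_add 1

lemma cube_deriv (x : ℝ) : HasDerivAt (fun x : ℝ => x ^ 3) (3 * x ^ 2) x := by
  simpa using hasDerivAt_pow 3 x

lemma h_deriv {x : ℝ} (h0 : 0 ≤ x) (h1 : x < 1) :
    HasDerivAt (fun x => S a (x ^ 3)) (S (D a) (x ^ 3) * (3 * x ^ 2)) x :=
  HasDerivAt.comp (h := fun x : ℝ => x ^ 3) x (hF (cube_mem h0 h1)) (cube_deriv x)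

lemma g_deriv {x : ℝ} (h0 : 0 ≤ x) (h1 : x < 1) :
    HasDerivAt g (2 * S a (x ^ 3) + (1 + 2 * x) * (S (D a) (x ^ 3) * (3 * x ^ 2))) x :=
  (lin_deriv x).mul (h_deriv h0 h1)

lemma R_deriv {x : ℝ} (h0 : 0 ≤ x) (h1 : x < 1) :
    HasDerivAt R (2 * (1 - x) ^ 2 / (1 + 2 * x) ^ 4 * g x) x := by
  have hp : 1 + 2 * x ≠ 0 := by positivity
  have hk : HasDerivAt (fun x => K (x ^ 3)) (2 / 9 * S a (x ^ 3) * (3 * x ^ 2)) x :=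
    HasDerivAt.comp (h := fun x : ℝ => x ^ 3) x (hK (cube_mem h0 h1)) (cube_deriv x)
  have hq : HasDerivAt (fun x : ℝ => 2 * (x * (1 - x ^ 3)))
      (2 * (1 * (1 - x ^ 3) + x * (-(3 * x ^ 2)))) x :=
    ((hasDerivAt_id x).mul ((cube_deriv x).const_sub 1)).const_mul 2
  have hN := (hq.mul (h_deriv h0 h1)).add (((lin_deriv x).const_mul 3).mul hk)
  have hR := hN.div ((lin_deriv x).pow 2) (pow_ne_zero 2 hp)
  refine HasDerivAt.congr_deriv hR ?_
  have e := K_eq (cube_mem h0 h1)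
  simp only [g, Pi.add_apply, Pi.mul_apply, Pi.pow_apply]
  rw [e]
  push_cast
  field_simp
  ring

lemma V_deriv {x : ℝ} (h0 : 0 ≤ x) (h1 : x < 1) : HasDerivAt V 0 x := by
  have hp : 1 + 2 * x ≠ 0 := by positivity
  have hk : HasDerivAt (fun x => K (al x))
      (2 / 9 * S a (al x) * (9 * (1 - x) ^ 2 / (1 + 2 * x) ^ 4)) x :=
    HasDerivAt.comp x (hK (abs_al h0 h1)) (al_deriv h0)
  have hV := ((f_deriv h0 h1).mul (R_deriv h0 h1)).sub ((g_deriv h0 h1).mul hk)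
  refine HasDerivAt.congr_deriv hV ?_
  rw [K_eq (abs_al h0 h1), R, K_eq (cube_mem h0 h1)]
  simp only [f, g]
  generalize S (D a) (al x) = A
  generalize S a (al x) = B
  rw [al]
  field_simp
  ring

lemma V_zero {x : ℝ} (h0 : 0 ≤ x) (h1 : x < 1) : V x = 0 := by
  have := constant_of_has_deriv_right_zero (f := V) (a := 0) (b := x)
    (fun y hy => (V_deriv hy.1 (hy.2.trans_lt h1)).continuousAt.continuousWithinAt)
    (fun y hy => (V_deriv hy.1 (hy.2.trans h1)).hasDerivWithinAt) x ⟨h0, le_rfl⟩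
  rw [this]
  simp [V, R, K, al, S_zero, T]

lemma wron {x : ℝ} (h0 : 0 ≤ x) (h1 : x < 1) :
    S (D a) (al x) * (9 * (1 - x) ^ 2 / (1 + 2 * x) ^ 4) * g x
      - f x * (2 * S a (x ^ 3) + (1 + 2 * x) * (S (D a) (x ^ 3) * (3 * x ^ 2))) = 0 := by
  rcases h0.eq_or_lt with rfl | hpos
  · have h := a_succ 0
    rw [a_zero] at h
    simp [f, g, al, S_zero, D, a_zero] at h ⊢
    linarith
  · have hp : 1 + 2 * x ≠ 0 := by positivity
    have hv := V_zero h0 h1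
    have hP : x * (1 - x ^ 3) / (1 + 2 * x) ^ 2 ≠ 0 := by
      have := pow_lt_one₀ h0 h1 (n := 3) (by norm_num)
      have : 0 < 1 - x ^ 3 := by linarith
      positivity
    refine (mul_eq_zero.1 (?_ : x * (1 - x ^ 3) / (1 + 2 * x) ^ 2 * _ = 0)).resolve_left hP
    rw [V, K_eq (abs_al h0 h1), R, K_eq (cube_mem h0 h1)] at hv
    simp only [f, g] at hv ⊢
    rw [← neg_eq_zero, ← hv]
    generalize S (D a) (al x) = A
    generalize S a (al x) = B
    rw [al]
    field_simp
    ring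

lemma f_eq_g {x : ℝ} (h0 : 0 ≤ x) (h1 : x < 1) : f x = g x := by
  have hg : ∀ y : ℝ, 0 ≤ y → y < 1 → g y ≠ 0 := fun y hy hy1 => by
    have := F_pos (pow_nonneg hy 3) (pow_lt_one₀ hy hy1 (by norm_num))
    rw [g]
    positivity
  have hd : ∀ y : ℝ, 0 ≤ y → y < 1 → HasDerivAt (fun y => f y / g y) 0 y := fun y hy hy1 =>
    HasDerivAt.congr_deriv ((f_deriv hy hy1).div (g_deriv hy hy1) (hg y hy hy1))
      (by rw [wron hy hy1, zero_div])
  have := constant_of_has_deriv_right_zero (f := fun y => f y / g y) (a := 0) (b := x)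
    (fun y hy => (hd y hy.1 (hy.2.trans_lt h1)).continuousAt.continuousWithinAt)
    (fun y hy => (hd y hy.1 (hy.2.trans h1)).hasDerivWithinAt) x ⟨h0, le_rfl⟩
  have h2 : f 0 / g 0 = 1 := by simp [f, g, al, S_zero, a_zero]
  rw [h2, div_eq_one_iff_eq (hg x h0 h1)] at this
  exact this

end BC

/-- Berndt–Chan √3 ratio. -/
theorem berndt_chan_sqrt3_ratio :
    hyp2F1 (1/3) (2/3) 1 (3 * Real.sqrt 3 / 4 * (Real.sqrt 3 - 1)) =
      Real.sqrt 3 * hyp2F1 (1/3) (2/3) 1 ((3 * Real.sqrt 3 - 5) / 4) := by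
  rw [BC.hyp_eq, BC.hyp_eq]
  have hs : Real.sqrt 3 ^ 2 = 3 := Real.sq_sqrt (by norm_num)
  have hpos : 0 ≤ Real.sqrt 3 := Real.sqrt_nonneg 3
  generalize Real.sqrt 3 = s at *
  have h1 : 1 < s := by nlinarith
  have h2 : s < 2 := by nlinarith
  have key := BC.f_eq_g (x := (s - 1) / 2) (by linarith) (by linarith)
  have e1 : ((s - 1) / 2) ^ 3 = (3 * s - 5) / 4 := by
    linear_combination (s - 3) / 8 * hs
  have e3 : (1 - (s - 1) / 2) / (1 + 2 * ((s - 1) / 2)) = (s - 1) / 2 := by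
    have : 1 + 2 * ((s - 1) / 2) = s := by ring
    rw [this, div_eq_iff (by linarith)]
    linear_combination -hs / 2
  have e2 : BC.al ((s - 1) / 2) = 3 * s / 4 * (s - 1) := by
    rw [BC.al, e3, e1]
    linear_combination -3 / 4 * hs
  rw [BC.f, BC.g, e2, e1] at key
  rw [key]
  ring
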